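/- For each n, let a = √((3/7)n) and let f : ℝ₊ → ℝ₊ be defined by f(x) = log a for 0 ≤ x ≤ a, f(x) = log x for a ≤ x ≤ 2a, and f(x) = √x − √(2a) + log(2a) for x ≥ 2a. Let X be a random vector in ℝⁿ with density proportional to e^{-(n-1)f(|x|)}. Then P(√((3/7)n) ≤ |X| ≤ 2√((3/7)n)) ≥ 1 − C/n for a universal constant C > 0. -/

import Mathlib

/-!
In polar coordinates the radius of `X` has density proportional to `ρ(r)^(n-1)`, where
`ρ(r) = r e^{-f(r)}`. The profile `ρ` equals `1` on the shell `[a, 2a]`, equals `r / a` on `[0, a]`,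
and beyond `2a` it is at most `exp (-(1 - 2 / √(2a)) (√r - √(2a)))`. Hence the shell has radial mass
`a`, the inner ball has mass `a / n` and, if `a ≥ 8` and `n ≥ 2`, the outer region has mass at most
`6a / n`. When `a` is at least of order `√n`, the remaining cases only concern bounded `n`, which
the constant absorbs.
-/

open MeasureTheory Real

/-- The radial profile: `log a` on `[0,a]`, `log x` on `[a,2a]`,
`√x - √(2a) + log(2a)` on `[2a,∞)`. -/
noncomputable def radialF (a x : ℝ) : ℝ :=
  if x ≤ a then Real.log a
  else if x ≤ 2 * a then Real.log x
  else Real.sqrt x - Real.sqrt (2 * a) + Real.log (2 * a)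

open Set Filter Topology

section RadialMeasure

variable {ι : Type*} [Fintype ι] [Nonempty ι]

lemma integral_fun_sqrt_sum_sq (f : ℝ → ℝ) :
    ∫ x : ι → ℝ, f √(∑ i, x i ^ 2) =
      Fintype.card ι * volume.real (Metric.ball (0 : EuclideanSpace ℝ ι) 1) *
        ∫ r in Ioi (0 : ℝ), r ^ (Fintype.card ι - 1) * f r := by
  calc
    ∫ x : ι → ℝ, f √(∑ i, x i ^ 2) = ∫ x : EuclideanSpace ℝ ι, f ‖x‖ := by
      rw [← (PiLp.volume_preserving_toLp ι).integral_comp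
        (MeasurableEquiv.toLp 2 (ι → ℝ)).measurableEmbedding]
      simp only [EuclideanSpace.norm_eq, norm_eq_abs, sq_abs]
    _ = _ := by
      rw [integral_fun_norm_addHaar, finrank_euclideanSpace, nsmul_eq_mul, smul_eq_mul, mul_assoc]
      simp only [smul_eq_mul]

variable {g : ℝ → ℝ} {S : Set ℝ}

lemma withDensity_real_sqrt_sum_sq_mem (hg : Measurable g) (hg0 : ∀ r, 0 ≤ g r)
    (hS : MeasurableSet S) :
    (volume.withDensity fun x : ι → ℝ ↦ ENNReal.ofReal (g √(∑ i, x i ^ 2))).real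
        {x | √(∑ i, x i ^ 2) ∈ S} =
      Fintype.card ι * volume.real (Metric.ball (0 : EuclideanSpace ℝ ι) 1) *
        ∫ r in Ioi 0 ∩ S, r ^ (Fintype.card ι - 1) * g r := by
  have hmeas : MeasurableSet {x : ι → ℝ | √(∑ i, x i ^ 2) ∈ S} :=
    measurableSet_preimage (f := fun x : ι → ℝ ↦ √(∑ i, x i ^ 2)) (by fun_prop) hS
  calc
    _ = ∫ x in {x : ι → ℝ | √(∑ i, x i ^ 2) ∈ S}, g √(∑ i, x i ^ 2) := by
      rw [measureReal_def, withDensity_apply _ hmeas,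
        integral_eq_lintegral_of_nonneg_ae (ae_of_all _ fun x ↦ hg0 _)
          (Measurable.aestronglyMeasurable (by fun_prop))]
    _ = ∫ x : ι → ℝ, S.indicator g √(∑ i, x i ^ 2) := by
      rw [← integral_indicator hmeas]
      rfl
    _ = _ := by
      simp_rw [integral_fun_sqrt_sum_sq, ← indicator_mul_right S fun r ↦ r ^ (Fintype.card ι - 1)]
      rw [setIntegral_indicator hS]

lemma one_sub_le_real_sqrt_sum_sq_mem {c δ : ℝ} {μ : Measure (ι → ℝ)} [IsProbabilityMeasure μ]
    (hg : Measurable g) (hg0 : ∀ r, 0 ≤ g r) (hS : MeasurableSet S) (hδ : 0 ≤ δ)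
    (hμ : μ = volume.withDensity fun x ↦ ENNReal.ofReal (c * g √(∑ i, x i ^ 2)))
    (hmass : ∫ r in Ioi 0 ∩ Sᶜ, r ^ (Fintype.card ι - 1) * g r ≤
      δ * ∫ r in Ioi 0 ∩ S, r ^ (Fintype.card ι - 1) * g r) :
    1 - δ ≤ μ.real {x | √(∑ i, x i ^ 2) ∈ S} := by
  obtain ⟨K, hK0, hK⟩ : ∃ K : ℝ, 0 ≤ K ∧ ∀ T, MeasurableSet T →
      μ.real {x | √(∑ i, x i ^ 2) ∈ T} =
        K * ∫ r in Ioi 0 ∩ T, r ^ (Fintype.card ι - 1) * g r := by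
    have hsmul : μ = ENNReal.ofReal c •
        volume.withDensity fun x ↦ ENNReal.ofReal (g √(∑ i, x i ^ 2)) := by
      rw [hμ, ← withDensity_smul _ (by fun_prop)]
      simp only [ENNReal.ofReal_mul' (hg0 _), Pi.smul_def, smul_eq_mul]
    refine ⟨(ENNReal.ofReal c).toReal * (Fintype.card ι *
      volume.real (Metric.ball (0 : EuclideanSpace ℝ ι) 1)), by positivity, fun T hT ↦ ?_⟩
    rw [hsmul, measureReal_ennreal_smul_apply, withDensity_real_sqrt_sum_sq_mem hg hg0 hT]
    ring
  have hcompl : μ.real {x | √(∑ i, x i ^ 2) ∈ Sᶜ} ≤ δ :=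
    calc
      _ ≤ K * (δ * ∫ r in Ioi 0 ∩ S, r ^ (Fintype.card ι - 1) * g r) := by
        rw [hK _ hS.compl]
        gcongr
      _ = δ * μ.real {x | √(∑ i, x i ^ 2) ∈ S} := by
        rw [hK S hS]
        ring
      _ ≤ δ := mul_le_of_le_one_right hδ measureReal_le_one
  have hadd : μ.real {x | √(∑ i, x i ^ 2) ∈ S} + μ.real {x | √(∑ i, x i ^ 2) ∈ Sᶜ} = 1 :=
    probReal_add_probReal_compl <|
      measurableSet_preimage (f := fun x : ι → ℝ ↦ √(∑ i, x i ^ 2)) (by fun_prop) hS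
  linarith

end RadialMeasure

section SqrtTail

variable {l b : ℝ}

lemma hasDerivAt_exp_neg_mul_sqrt_sub {x : ℝ} (hl : l ≠ 0) (hx : 0 < x) :
    HasDerivAt (fun r ↦ -(2 * √r / l + 2 / l ^ 2) * exp (-l * (√r - √b)))
      (exp (-l * (√x - √b))) x := by
  have hsqrt := hasDerivAt_sqrt hx.ne'
  have : 0 < √x := sqrt_pos.2 hx
  refine (((((hsqrt.const_mul 2).div_const l).add_const (2 / l ^ 2)).neg).mul
    ((hsqrt.sub_const √b).const_mul (-l)).exp).congr_deriv ?_
  simp only [Pi.neg_apply]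
  field_simp
  ring

lemma tendsto_mul_exp_neg_mul_sqrt_sub (hl : 0 < l) :
    Tendsto (fun r ↦ -(2 * √r / l + 2 / l ^ 2) * exp (-l * (√r - √b))) atTop (𝓝 0) := by
  have hpow (s : ℝ) : Tendsto (fun r ↦ √r ^ s * exp (-l * √r)) atTop (𝓝 0) :=
    (tendsto_rpow_mul_exp_neg_mul_atTop_nhds_zero s l hl).comp tendsto_sqrt_atTop
  have hsum := (((hpow 1).const_mul (2 / l)).add ((hpow 0).const_mul (2 / l ^ 2))).const_mul
    (-exp (l * √b))
  simp only [mul_zero, add_zero, rpow_one, rpow_zero] at hsum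
  refine hsum.congr fun r ↦ ?_
  rw [show -l * (√r - √b) = l * √b + -l * √r by ring, exp_add]
  ring

lemma integrableOn_exp_neg_mul_sqrt_sub (hl : 0 < l) (hb : 0 ≤ b) :
    IntegrableOn (fun r ↦ exp (-l * (√r - √b))) (Ioi b) :=
  integrableOn_Ioi_deriv_of_nonneg (by fun_prop)
    (fun _ hx ↦ hasDerivAt_exp_neg_mul_sqrt_sub hl.ne' (hb.trans_lt hx))
    (fun _ _ ↦ (exp_pos _).le) (tendsto_mul_exp_neg_mul_sqrt_sub hl)

lemma integral_exp_neg_mul_sqrt_sub (hl : 0 < l) (hb : 0 ≤ b) :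
    ∫ r in Ioi b, exp (-l * (√r - √b)) = 2 * √b / l + 2 / l ^ 2 := by
  rw [integral_Ioi_of_hasDerivAt_of_tendsto (by fun_prop)
    (fun _ hx ↦ hasDerivAt_exp_neg_mul_sqrt_sub hl.ne' (hb.trans_lt hx))
    (integrableOn_exp_neg_mul_sqrt_sub hl hb) (tendsto_mul_exp_neg_mul_sqrt_sub hl)]
  simp

end SqrtTail

@[fun_prop]
lemma measurable_radialF (a : ℝ) : Measurable (radialF a) :=
  Measurable.ite measurableSet_Iic (by fun_prop)
    (Measurable.ite measurableSet_Iic (by fun_prop) (by fun_prop))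

/-- The function `ρ(r) = r e^{-f(r)}`: in dimension `m + 1` the radial density
`r ^ m * e^{-m f(r)}` is its `m`-th power. -/
noncomputable def radialProfile (a r : ℝ) : ℝ :=
  r * exp (-radialF a r)

lemma radialProfile_pow (m : ℕ) (a r : ℝ) :
    radialProfile a r ^ m = r ^ m * exp (-m * radialF a r) := by
  rw [radialProfile, mul_pow, ← exp_nat_mul, mul_neg, neg_mul]

section RadialProfile

variable {a r : ℝ}

@[fun_prop]
lemma measurable_radialProfile : Measurable (radialProfile a) := by
  unfold radialProfile
  fun_prop

lemma radialProfile_nonneg (hr : 0 ≤ r) : 0 ≤ radialProfile a r :=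
  mul_nonneg hr (exp_pos _).le

lemma radialProfile_of_le (ha : 0 < a) (hr : r ≤ a) : radialProfile a r = r / a := by
  rw [radialProfile, radialF, if_pos hr, exp_neg, exp_log ha, div_eq_mul_inv]

lemma radialProfile_of_mem_Icc (ha : 0 < a) (hr : r ∈ Icc a (2 * a)) : radialProfile a r = 1 := by
  obtain rfl | har := hr.1.eq_or_lt
  · rw [radialProfile_of_le ha le_rfl, div_self ha.ne']
  · have hr0 : 0 < r := ha.trans har
    rw [radialProfile, radialF, if_neg har.not_ge, if_pos hr.2, exp_neg, exp_log hr0,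
      mul_inv_cancel₀ hr0.ne']

lemma radialProfile_of_two_mul_lt (ha : 0 < a) (hr : 2 * a < r) :
    radialProfile a r = r / (2 * a) * exp (-(√r - √(2 * a))) := by
  rw [radialProfile, radialF, if_neg (by linarith), if_neg hr.not_ge, neg_add, exp_add,
    exp_neg (log _), exp_log (by linarith)]
  ring

lemma radialProfile_le_exp (ha : 0 < a) (hr : 2 * a < r) :
    radialProfile a r ≤ exp (-(1 - 2 / √(2 * a)) * (√r - √(2 * a))) := by
  have : 0 < √(2 * a) := sqrt_pos.2 (by linarith)
  have hquot : r / (2 * a) ≤ exp (√r / √(2 * a) - 1) ^ 2 :=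
    calc
      r / (2 * a) = (√r / √(2 * a)) ^ 2 := by
        rw [div_pow, sq_sqrt (by linarith), sq_sqrt (by linarith)]
      _ ≤ exp (√r / √(2 * a) - 1) ^ 2 := by
        gcongr
        linarith [add_one_le_exp (√r / √(2 * a) - 1)]
  calc
    radialProfile a r = r / (2 * a) * exp (-(√r - √(2 * a))) := radialProfile_of_two_mul_lt ha hr
    _ ≤ exp (√r / √(2 * a) - 1) ^ 2 * exp (-(√r - √(2 * a))) := by gcongr
    _ = exp (-(1 - 2 / √(2 * a)) * (√r - √(2 * a))) := by
      rw [← exp_nat_mul, ← exp_add]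
      congr 1
      field_simp
      push_cast
      ring

variable (m : ℕ)

lemma integral_radialProfile_pow_Icc (ha : 0 < a) :
    ∫ r in Icc a (2 * a), radialProfile a r ^ m = a := by
  rw [setIntegral_congr_fun (g := fun _ ↦ 1) measurableSet_Icc fun r hr ↦ by
    simp only [radialProfile_of_mem_Icc ha hr, one_pow]]
  simp [two_mul, ha.le]

lemma integral_radialProfile_pow_Ioo (ha : 0 < a) :
    ∫ r in Ioo 0 a, radialProfile a r ^ m = a / (m + 1) := by
  rw [setIntegral_congr_fun (g := fun r ↦ r ^ m / a ^ m) measurableSet_Ioo fun r hr ↦ by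
      simp only [radialProfile_of_le ha hr.2.le, div_pow],
    ← integral_Ioc_eq_integral_Ioo, ← intervalIntegral.integral_of_le ha.le,
    intervalIntegral.integral_div, integral_pow, zero_pow m.succ_ne_zero, sub_zero, pow_succ]
  field_simp

lemma integrableOn_radialProfile_pow_Ioo (ha : 0 < a) :
    IntegrableOn (fun r ↦ radialProfile a r ^ m) (Ioo 0 a) := by
  refine IntegrableOn.congr_fun (f := fun r ↦ (r / a) ^ m) ?_
    (fun r hr ↦ by simp only [radialProfile_of_le ha hr.2.le]) measurableSet_Ioo
  exact (Continuous.integrableOn_Icc (by fun_prop)).mono_set Ioo_subset_Icc_self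

variable {m}

lemma radialProfile_pow_le_exp (ha : 8 ≤ a) (hr : 2 * a < r) :
    radialProfile a r ^ m ≤ exp (-(m / 2) * (√r - √(2 * a))) := by
  have hv : 4 ≤ √(2 * a) := le_sqrt_of_sq_le (by linarith)
  have hquot : 2 / √(2 * a) ≤ 1 / 2 := by
    rw [div_le_div_iff₀ (by linarith) two_pos]
    linarith
  have hsub : 0 ≤ √r - √(2 * a) := sub_nonneg.2 (sqrt_le_sqrt hr.le)
  calc
    radialProfile a r ^ m ≤ exp (-(1 - 2 / √(2 * a)) * (√r - √(2 * a))) ^ m :=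
      pow_le_pow_left₀ (radialProfile_nonneg (by linarith))
        (radialProfile_le_exp (by linarith) hr) m
    _ ≤ exp (-(1 / 2) * (√r - √(2 * a))) ^ m := by
      gcongr
      linarith
    _ = exp (-(m / 2) * (√r - √(2 * a))) := by
      rw [← exp_nat_mul]
      ring_nf

lemma integrableOn_radialProfile_pow_Ioi (hm : 0 < m) (ha : 8 ≤ a) :
    IntegrableOn (fun r ↦ radialProfile a r ^ m) (Ioi (2 * a)) := by
  refine (integrableOn_exp_neg_mul_sqrt_sub (l := m / 2) (by positivity)
    (by linarith)).mono' (by fun_prop) ?_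
  filter_upwards [ae_restrict_mem measurableSet_Ioi] with r hr
  have hr0 : 0 ≤ r := by linarith [mem_Ioi.1 hr]
  rw [norm_of_nonneg (pow_nonneg (radialProfile_nonneg hr0) m)]
  exact radialProfile_pow_le_exp ha hr

lemma integral_radialProfile_pow_Ioi_le (hm : 0 < m) (ha : 8 ≤ a) :
    ∫ r in Ioi (2 * a), radialProfile a r ^ m ≤ 6 * a / (m + 1) := by
  have hm1 : (1 : ℝ) ≤ m := by exact_mod_cast hm
  have hv : √(2 * a) ≤ a / 2 := by
    rw [sqrt_le_left (by linarith)]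
    nlinarith
  calc
    _ ≤ ∫ r in Ioi (2 * a), exp (-(m / 2) * (√r - √(2 * a))) :=
      setIntegral_mono_on (integrableOn_radialProfile_pow_Ioi hm ha)
        (integrableOn_exp_neg_mul_sqrt_sub (by positivity) (by linarith)) measurableSet_Ioi
        fun r hr ↦ radialProfile_pow_le_exp ha hr
    _ = 2 * √(2 * a) / (m / 2) + 2 / (m / 2) ^ 2 :=
      integral_exp_neg_mul_sqrt_sub (by positivity) (by linarith)
    _ ≤ 2 * (a / 2) / (m / 2) + a / m := by
      gcongr ?_ + ?_
      · gcongr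
      · rw [div_le_div_iff₀ (by positivity) (by positivity)]
        nlinarith [mul_nonneg (sub_nonneg.2 ha) (sq_nonneg (m : ℝ))]
    _ ≤ 6 * a / (m + 1) := by
      field_simp
      nlinarith

lemma integral_radialProfile_pow_compl_shell_le (hm : 0 < m) (ha : 8 ≤ a) :
    ∫ r in Ioi 0 ∩ (Icc a (2 * a))ᶜ, radialProfile a r ^ m ≤
      7 / (m + 1) * ∫ r in Ioi 0 ∩ Icc a (2 * a), radialProfile a r ^ m := by
  have ha0 : 0 < a := by linarith
  have hshell : Ioi 0 ∩ Icc a (2 * a) = Icc a (2 * a) :=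
    inter_eq_right.2 fun r hr ↦ ha0.trans_le hr.1
  have hcompl : Ioi 0 ∩ (Icc a (2 * a))ᶜ = Ioo 0 a ∪ Ioi (2 * a) := by
    ext r
    simp only [mem_inter_iff, mem_Ioi, mem_compl_iff, mem_Icc, mem_union, mem_Ioo]
    grind
  have hdisj : Disjoint (Ioo 0 a) (Ioi (2 * a)) :=
    disjoint_left.2 fun r hr hr' ↦ by linarith [hr.2, mem_Ioi.1 hr']
  rw [hshell, integral_radialProfile_pow_Icc m ha0, hcompl, setIntegral_union hdisj
    measurableSet_Ioi (integrableOn_radialProfile_pow_Ioo m ha0)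
    (integrableOn_radialProfile_pow_Ioi hm ha), integral_radialProfile_pow_Ioo m ha0]
  calc
    _ ≤ a / (m + 1) + 6 * a / (m + 1) := by
      gcongr
      exact integral_radialProfile_pow_Ioi_le hm ha
    _ = 7 / (m + 1) * a := by ring

end RadialProfile

lemma one_sub_seven_div_le_real_shell {m : ℕ} (hm : 0 < m) {a : ℝ} (ha : 8 ≤ a) {c : ℝ}
    {μ : Measure (Fin (m + 1) → ℝ)} [IsProbabilityMeasure μ]
    (hμ : μ = volume.withDensity fun x ↦
      ENNReal.ofReal (c * exp (-m * radialF a √(∑ i, x i ^ 2)))) :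
    1 - 7 / ((m : ℝ) + 1) ≤ μ.real {x | √(∑ i, x i ^ 2) ∈ Icc a (2 * a)} := by
  refine one_sub_le_real_sqrt_sum_sq_mem (g := fun r ↦ exp (-m * radialF a r)) (by fun_prop)
    (fun _ ↦ (exp_pos _).le) measurableSet_Icc (by positivity) hμ ?_
  simpa only [Fintype.card_fin, Nat.add_sub_cancel, radialProfile_pow] using
    integral_radialProfile_pow_compl_shell_le hm ha

theorem norm_concentration_radial_general {κ : ℝ} (hκ : 0 < κ) :
    ∃ C : ℝ, 0 < C ∧
      ∀ n : ℕ, 1 ≤ n → ∀ a : ℝ, κ * √n ≤ a →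
        ∀ (Cn : ℝ) (μ : Measure (Fin n → ℝ)),
          μ = (volume : Measure (Fin n → ℝ)).withDensity
            (fun x ↦ ENNReal.ofReal (Cn * exp (-((n : ℝ) - 1) * radialF a √(∑ i, x i ^ 2)))) →
          IsProbabilityMeasure μ →
          1 - C / n ≤ μ.real {x | a ≤ √(∑ i, x i ^ 2) ∧ √(∑ i, x i ^ 2) ≤ 2 * a} := by
  refine ⟨64 / κ ^ 2 + 7, by positivity, fun n hn a ha Cn μ hμ _ ↦ ?_⟩
  obtain ⟨m, rfl⟩ := Nat.exists_eq_add_of_le' hn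
  by_cases hlarge : 0 < m ∧ 8 ≤ a
  · refine le_trans ?_ (one_sub_seven_div_le_real_shell hlarge.1 hlarge.2 (by simpa using hμ))
    push_cast
    gcongr
    exact le_add_of_nonneg_left (by positivity)
  · have hsmall : ((m + 1 : ℕ) : ℝ) ≤ 64 / κ ^ 2 + 7 := by
      obtain hm | ha8 := not_and_or.1 hlarge
      · obtain rfl : m = 0 := by omega
        have : 0 < 64 / κ ^ 2 := by positivity
        norm_num
        linarith
      · have hsq : κ ^ 2 * ((m + 1 : ℕ) : ℝ) ≤ 64 := by
          rw [← sq_sqrt (Nat.cast_nonneg (m + 1)), ← mul_pow]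
          exact (pow_le_pow_left₀ (by positivity) (ha.trans (not_le.1 ha8).le) 2).trans_eq
            (by norm_num)
        have : ((m + 1 : ℕ) : ℝ) ≤ 64 / κ ^ 2 := (le_div_iff₀' (by positivity)).2 hsq
        linarith
    have : 1 ≤ (64 / κ ^ 2 + 7) / ((m + 1 : ℕ) : ℝ) := (one_le_div₀ (by positivity)).2 hsmall
    exact (sub_nonpos.2 this).trans measureReal_nonneg

/-- For `X` distributed with density proportional to `e^{-(n-1) f(|x|)}` with
`a = √((3/7)n)`, the norm `|X|` concentrates on `[√((3/7)n), 2√((3/7)n)]`. -/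
theorem norm_concentration_radial :
    ∃ C : ℝ, 0 < C ∧
      ∀ n : ℕ, 1 ≤ n →
        ∀ (Cn : ℝ) (μ : Measure (Fin n → ℝ)),
          μ = (volume : Measure (Fin n → ℝ)).withDensity
            (fun x => ENNReal.ofReal (Cn * Real.exp (-((n : ℝ) - 1) *
              radialF (Real.sqrt (3 / 7 * n)) (Real.sqrt (∑ i, (x i) ^ 2))))) →
          IsProbabilityMeasure μ →
          1 - C / n ≤
            (μ {x | Real.sqrt (3 / 7 * n) ≤ Real.sqrt (∑ i, (x i) ^ 2) ∧
                Real.sqrt (∑ i, (x i) ^ 2) ≤ 2 * Real.sqrt (3 / 7 * n)}).toReal := by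
  obtain ⟨C, hC, hconc⟩ := norm_concentration_radial_general (κ := √(3 / 7)) (by positivity)
  exact ⟨C, hC, fun n hn ↦ hconc n hn _ (sqrt_mul (by norm_num) _).ge⟩
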